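/- Let G be a commutative group, N ≤ G a submonoid, b ∈ N, ℓ ∈ ℕ, and Ω ⊆ Z_{N,ℓ}(b) infinite. Let S be a maximal element of the poset 𝒮_Ω(N,G) of Ω-admissible submonoids between N and G under the order ≼ (i.e., S is Ω-admissible and every Ω-admissible T with S ≼ T equals S). Then for every u ∈ G satisfying condition (i) or condition (ii), one has b^2 * u ∈ S. -/

import Mathlib

/-- The set of factorizations of `b` in the submonoid `S` of the group `G`. -/
def ZSet {G : Type*} [CommGroup G] (S : Submonoid G) (b : S) :
    Set (Multiset (Associates S)) :=
  {z | (∀ a ∈ z, Irreducible a) ∧ z.prod = Associates.mk b}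

/-- The set of length-`ℓ` factorizations of `b` in `S`. -/
def ZSetLen {G : Type*} [CommGroup G] (S : Submonoid G) (b : S) (ℓ : ℕ) :
    Set (Multiset (Associates S)) :=
  {z ∈ ZSet S b | Multiset.card z = ℓ}

/-- `u` is a unit of the submonoid `S` of the group `G`: `u⁻¹ ∈ S`. -/
def IsUnitIn {G : Type*} [CommGroup G] (S : Submonoid G) (u : G) : Prop :=
  u⁻¹ ∈ S

/-- `S` is unit-reflecting over `N`. -/
def UnitReflecting {G : Type*} [CommGroup G] (N S : Submonoid G) : Prop :=
  ∀ u ∈ S, IsUnitIn S u → ∀ x ∈ N, ∀ y ∈ N, u * y = x → u ∈ N ∧ IsUnitIn N u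

/-- `S` is `Ω`-admissible over `N`: `N ≤ S`, `S` is unit-reflecting over `N`, and
every `a ∈ N` whose class in `Associates ↥N` occurs in some `z ∈ Ω` has irreducible
class in `Associates ↥S`. -/
def OmegaAdmissible {G : Type*} [CommGroup G] (N S : Submonoid G)
    (Ω : Set (Multiset (Associates N))) : Prop :=
  N ≤ S ∧ UnitReflecting N S ∧
    ∀ (a : G) (haN : a ∈ N) (haS : a ∈ S),
      (∃ z ∈ Ω, Associates.mk (⟨a, haN⟩ : N) ∈ z) →
        Irreducible (Associates.mk (⟨a, haS⟩ : S))

/-- The survival order: `S₁ ≼ S₂` iff `S₁ ≤ S₂` and every element of `S₁` that is a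
unit of `↥S₂` is a unit of `↥S₁`. -/
def Prec {G : Type*} [CommGroup G] (S₁ S₂ : Submonoid G) : Prop :=
  S₁ ≤ S₂ ∧ ∀ u ∈ S₁, IsUnitIn S₂ u → IsUnitIn S₁ u

lemma irreducible_mk_iff {M : Type*} [CommMonoid M] (a : M) :
    Irreducible (Associates.mk a) ↔ Irreducible a := by
  constructor
  · intro h
    refine ⟨fun ha => h.not_isUnit (Associates.isUnit_mk.2 ha), fun x y hxy => ?_⟩
    have := h.isUnit_or_isUnit (a := Associates.mk x) (b := Associates.mk y)
      (by rw [hxy, Associates.mk_mul_mk])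
    rwa [Associates.isUnit_mk, Associates.isUnit_mk] at this
  · intro h
    refine ⟨fun ha => h.not_isUnit (Associates.isUnit_mk.1 ha), fun x y hxy => ?_⟩
    obtain ⟨x, rfl⟩ := Associates.mk_surjective x
    obtain ⟨y, rfl⟩ := Associates.mk_surjective y
    rw [Associates.mk_mul_mk, Associates.mk_eq_mk_iff_associated] at hxy
    obtain ⟨w, hw⟩ := hxy.symm
    rw [Associates.isUnit_mk, Associates.isUnit_mk]
    have := h.isUnit_or_isUnit (a := x) (b := y * w) (by rw [← hw, mul_assoc])
    simpa using this

lemma isUnit_sub_iff {G : Type*} [CommGroup G] (S : Submonoid G) (x : G) (hx : x ∈ S) :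
    IsUnit (⟨x, hx⟩ : S) ↔ x⁻¹ ∈ S := by
  constructor
  · intro h
    obtain ⟨y, hy⟩ := h.exists_right_inv
    have h2 : x * (y : G) = 1 := congrArg Subtype.val hy
    rw [inv_eq_of_mul_eq_one_right h2]
    exact y.2
  · intro h
    exact IsUnit.of_mul_eq_one ⟨x⁻¹, h⟩ (Subtype.ext (mul_inv_cancel x))

/-- Maximality forces `b^2 * u`: if `S` is a maximal element of the poset of
`Ω`-admissible submonoids under `≼`, with `Ω ⊆ Z_{N,ℓ}(b)` infinite, then for every
`u` satisfying condition (i) or condition (ii) one has `b^2 * u ∈ S`. -/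
theorem maximal_forces {G : Type*} [CommGroup G] (N S : Submonoid G)
    (b : G) (hb : b ∈ N) (ℓ : ℕ) (Ω : Set (Multiset (Associates N)))
    (hΩ : Ω ⊆ ZSetLen N ⟨b, hb⟩ ℓ) (hinf : Ω.Infinite)
    (hadm : OmegaAdmissible N S Ω)
    (hmax : ∀ T : Submonoid G, OmegaAdmissible N T Ω → Prec S T → T = S) :
    ∀ u : G,
      ((∃ n₀ : ℕ, 1 ≤ n₀ ∧ u ^ n₀ ∈ S) ∨
        (∀ n : ℕ, 1 ≤ n → ∀ q ∈ S, u ^ n * q ≠ 1)) →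
      b ^ 2 * u ∈ S := by
  intro u hu
  obtain ⟨hNS, hUR, hirr⟩ := hadm
  have hbS : b ∈ S := hNS hb
  have hdvd : ∀ (a : G) (haN : a ∈ N), (∃ z ∈ Ω, Associates.mk (⟨a, haN⟩ : N) ∈ z) →
      ∃ c ∈ N, b = a * c := by
    rintro a haN ⟨z, hz, haz⟩
    have h1 := Multiset.dvd_prod haz
    rw [(hΩ hz).1.2, Associates.mk_dvd_mk] at h1
    obtain ⟨c, hc⟩ := h1
    exact ⟨c, c.2, congrArg Subtype.val hc⟩
  have hbnu : ∀ q ∈ S, b * q ≠ 1 := by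
    intro q hq hbq
    obtain ⟨z, hz, hz0⟩ := hinf.exists_notMem_finset {0}
    have hz0' : z ≠ 0 := by simpa using hz0
    obtain ⟨α, hα⟩ := Multiset.exists_mem_of_ne_zero hz0'
    obtain ⟨⟨a, haN⟩, rfl⟩ := Associates.mk_surjective α
    obtain ⟨c, hc, hbc⟩ := hdvd a haN ⟨z, hz, hα⟩
    have hi := hirr a haN (hNS haN) ⟨z, hz, hα⟩
    rw [irreducible_mk_iff] at hi
    apply hi.not_isUnit
    rw [isUnit_sub_iff]
    have : a * (c * q) = 1 := by rw [← mul_assoc, ← hbc, hbq]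
    rw [inv_eq_of_mul_eq_one_right this]
    exact S.mul_mem (hNS hc) hq
  have key : ∀ n : ℕ, 1 ≤ n → ∀ q ∈ S, u ^ n * (b * q) ≠ 1 := by
    intro n hn q hq h
    rcases hu with ⟨n₀, h1, hun⟩ | hu
    · obtain ⟨m, rfl⟩ : ∃ m, n₀ = m + 1 := ⟨n₀ - 1, by omega⟩
      refine hbnu (b ^ m * q ^ (m + 1) * (u ^ (m + 1)) ^ n)
        (S.mul_mem (S.mul_mem (S.pow_mem hbS _) (S.pow_mem hq _)) (S.pow_mem hun _)) ?_
      have h2 : (u ^ n * (b * q)) ^ (m + 1) = 1 := by rw [h, one_pow]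
      rw [← h2, mul_pow, mul_pow, ← pow_mul, ← pow_mul, mul_comm n, pow_succ b m]
      generalize u ^ ((m + 1) * n) = x
      generalize q ^ (m + 1) = y
      generalize b ^ m = w
      simp only [mul_comm, mul_left_comm]
    · exact hu n hn _ (S.mul_mem hbS hq) h
  -- key, in terms of v
  have key2 : ∀ n : ℕ, ∀ q ∈ S, q * (b ^ 2 * u) ^ n = 1 → n = 0 := by
    intro n q hq h
    by_contra hn
    obtain ⟨m, rfl⟩ : ∃ m, n = m + 1 := ⟨n - 1, by omega⟩
    refine key (m + 1) (by omega) (b ^ (2 * m + 1) * q) (S.mul_mem (S.pow_mem hbS _) hq) ?_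
    rw [← h, mul_pow, ← pow_mul, show 2 * (m + 1) = (2 * m + 1) + 1 by ring, pow_succ b (2 * m + 1)]
    simp only [mul_comm, mul_left_comm]
  have key3 : ∀ n : ℕ, ∀ q ∈ S, ∀ a c : G, c ∈ S → b = a * c →
      a = q * (b ^ 2 * u) ^ n → n = 0 := by
    intro n q hq a c hc hbc h
    by_contra hn
    obtain ⟨m, rfl⟩ : ∃ m, n = m + 1 := ⟨n - 1, by omega⟩
    refine key (m + 1) (by omega) (b ^ (2 * m) * q * c)
      (S.mul_mem (S.mul_mem (S.pow_mem hbS _) hq) hc) ?_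
    have h3 : b * (u ^ (m + 1) * (b * (b ^ (2 * m) * q * c))) = b := by
      conv_rhs => rw [hbc, h]
      rw [mul_pow, ← pow_mul, show 2 * (m + 1) = (2 * m + 1) + 1 by ring, pow_succ b, pow_succ b]
      simp only [mul_comm, mul_left_comm]
    exact mul_eq_left.mp h3
  set v := b ^ 2 * u with hv
  let T : Submonoid G := S ⊔ Submonoid.powers v
  have hST : S ≤ T := le_sup_left
  have hvT : v ∈ T := (le_sup_right : Submonoid.powers v ≤ T) (Submonoid.mem_powers v)
  have hT : ∀ x ∈ T, ∃ s ∈ S, ∃ k : ℕ, x = s * v ^ k := by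
    intro x hx
    obtain ⟨s, hs, y, ⟨k, rfl⟩, rfl⟩ := Submonoid.mem_sup.mp hx
    exact ⟨s, hs, k, rfl⟩
  have hunit : ∀ x ∈ T, x⁻¹ ∈ T → x ∈ S ∧ x⁻¹ ∈ S := by
    intro x hx hx'
    obtain ⟨s, hs, k, h1⟩ := hT x hx
    obtain ⟨t, ht, m, h2⟩ := hT _ hx'
    have h3 : (s * t) * v ^ (k + m) = 1 := by
      rw [pow_add, mul_mul_mul_comm, ← h1, ← h2, mul_inv_cancel]
    have h4 := key2 _ _ (S.mul_mem hs ht) h3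
    obtain ⟨rfl, rfl⟩ : k = 0 ∧ m = 0 := by omega
    rw [pow_zero, mul_one] at h1 h2
    rw [h2, h1]
    exact ⟨hs, ht⟩
  have hTS : T = S := by
    apply hmax
    · refine ⟨hNS.trans hST, ?_, ?_⟩
      · intro w hw hw' x hx y hy h
        obtain ⟨h1, h2⟩ := hunit w hw hw'
        exact hUR w h1 h2 x hx y hy h
      · intro a haN haT hz
        have hi := hirr a haN (hNS haN) hz
        obtain ⟨c, hc, hbc⟩ := hdvd a haN hz
        rw [irreducible_mk_iff] at hi ⊢
        refine ⟨?_, ?_⟩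
        · intro h
          rw [isUnit_sub_iff] at h
          exact hi.not_isUnit ((isUnit_sub_iff S a (hNS haN)).2 (hunit a haT h).2)
        · rintro ⟨x, hx⟩ ⟨y, hy⟩ hxy
          have hxy' : a = x * y := congrArg Subtype.val hxy
          obtain ⟨s, hs, k, h1⟩ := hT x hx
          obtain ⟨t, ht, m, h2⟩ := hT y hy
          have h3 : a = (s * t) * v ^ (k + m) := by
            rw [pow_add, mul_mul_mul_comm, ← h1, ← h2, hxy']
          have h4 := key3 _ _ (S.mul_mem hs ht) a c (hNS hc) hbc h3
          obtain ⟨rfl, rfl⟩ : k = 0 ∧ m = 0 := by omega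
          rw [pow_zero, mul_one] at h1 h2
          subst h1 h2
          have h5 := hi.isUnit_or_isUnit (a := ⟨x, hs⟩) (b := ⟨y, ht⟩) (Subtype.ext hxy')
          rw [isUnit_sub_iff, isUnit_sub_iff] at h5
          rw [isUnit_sub_iff, isUnit_sub_iff]
          exact h5.imp (fun h => hST h) (fun h => hST h)
    · exact ⟨hST, fun w hw hw' => (hunit w (hST hw) hw').2⟩
  rw [← hTS]
  exact hvT
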